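/- arXiv:2206.04160 — 2 statements merged into one kernel-verified Lean document; each statement's English description precedes it below -/
import Mathlib

section
/- Let m = n, let A ∈ ℝ^{n×n} be invertible with smallest singular value α_min > 0, and let H : ℝ^{2n} → ℝ be differentiable and μ-strongly convex with respect to the ℓ₂-norm, with minimizer z* = argmin H. If (z_k) satisfies the backward method z_{k+1} = z_k − η J ∇H(z_{k+1}) with J = [[0, A],[−Aᵀ, 0]] and step size η > 0, then for all k ≥ 0: H(z_k) − H(z*) ≤ (H(z₀) − H(z*)) / (1 + η² α_min² μ²)^k. -/
open RealInnerProductSpace Matrix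

lemma aux_skew {n : ℕ} (A : Matrix (Fin n) (Fin n) ℝ)
    (g : EuclideanSpace ℝ (Fin n ⊕ Fin n)) :
    ⟪g, Matrix.toEuclideanLin (Matrix.fromBlocks 0 A (-Aᵀ) 0) g⟫ = 0 := by
  have h : (Matrix.fromBlocks 0 A (-Aᵀ) 0 *ᵥ g.ofLp) ⬝ᵥ g.ofLp = 0 := by
    have h1 : (Matrix.fromBlocks 0 A (-Aᵀ) 0)ᵀ = -(Matrix.fromBlocks 0 A (-Aᵀ) 0) := by
      simp [Matrix.fromBlocks_transpose, Matrix.fromBlocks_neg]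
    have h2 : (Matrix.fromBlocks 0 A (-Aᵀ) 0 *ᵥ g.ofLp) ⬝ᵥ g.ofLp
        = -((Matrix.fromBlocks 0 A (-Aᵀ) 0 *ᵥ g.ofLp) ⬝ᵥ g.ofLp) := by
      conv_lhs => rw [dotProduct_comm, Matrix.dotProduct_mulVec, ← Matrix.mulVec_transpose, h1,
        Matrix.neg_mulVec, neg_dotProduct]
    linarith
  rw [EuclideanSpace.inner_eq_star_dotProduct]
  simpa [Matrix.toLpLin_apply] using h

lemma aux_norm {n : ℕ} (A : Matrix (Fin n) (Fin n) ℝ) (a : ℝ) (ha : 0 < a)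
    (hA : ∀ v : EuclideanSpace ℝ (Fin n), a * ‖v‖ ≤ ‖Matrix.toEuclideanLin A v‖)
    (hAT : ∀ v : EuclideanSpace ℝ (Fin n), a * ‖v‖ ≤ ‖Matrix.toEuclideanLin Aᵀ v‖)
    (g : EuclideanSpace ℝ (Fin n ⊕ Fin n)) :
    a ^ 2 * ‖g‖ ^ 2 ≤ ‖Matrix.toEuclideanLin (Matrix.fromBlocks 0 A (-Aᵀ) 0) g‖ ^ 2 := by
  have h1 := pow_le_pow_left₀ (by positivity) (hAT (WithLp.toLp 2 (g.ofLp ∘ Sum.inl))) 2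
  have h2 := pow_le_pow_left₀ (by positivity) (hA (WithLp.toLp 2 (g.ofLp ∘ Sum.inr))) 2
  rw [mul_pow, EuclideanSpace.real_norm_sq_eq, EuclideanSpace.real_norm_sq_eq] at h1 h2
  rw [EuclideanSpace.real_norm_sq_eq, EuclideanSpace.real_norm_sq_eq]
  simp only [Matrix.toLpLin_apply, Fintype.sum_sum_type, Matrix.fromBlocks_mulVec,
    Matrix.zero_mulVec, Matrix.neg_mulVec, Sum.elim_inl, Sum.elim_inr, zero_add, add_zero,
    Pi.neg_apply, neg_sq, Function.comp_apply] at h1 h2 ⊢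
  linarith

/-- **The backward method decreases the energy exponentially fast for strongly convex `H`.**
If `A` is invertible with smallest singular value `α_min > 0` and `H` is `μ`-strongly convex,
then along `z_{k+1} = z_k − η J ∇H(z_{k+1})` one has
`H(z_k) − H(z*) ≤ (H(z₀) − H(z*)) / (1 + η² α_min² μ²)^k`. -/
theorem backward_method_energy_decrease_strongly_convex {n : ℕ}
    (A : Matrix (Fin n) (Fin n) ℝ) (hAunit : IsUnit A)
    (αmin : ℝ) (hαmin : 0 < αmin)
    -- `αmin` is (a lower bound for) the smallest singular value of `A`
    (hA : ∀ v : EuclideanSpace ℝ (Fin n), αmin * ‖v‖ ≤ ‖Matrix.toEuclideanLin A v‖)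
    (hAT : ∀ v : EuclideanSpace ℝ (Fin n), αmin * ‖v‖ ≤ ‖Matrix.toEuclideanLin Aᵀ v‖)
    (H : EuclideanSpace ℝ (Fin n ⊕ Fin n) → ℝ) (hH : Differentiable ℝ H)
    (μ : ℝ) (hμ : 0 < μ)
    -- `H` is `μ`-strongly convex with respect to the `ℓ₂`-norm
    (hsc : ∀ w w', H w + ⟪gradient H w, w' - w⟫ + μ / 2 * ‖w' - w‖ ^ 2 ≤ H w')
    (zstar : EuclideanSpace ℝ (Fin n ⊕ Fin n)) (hmin : ∀ w, H zstar ≤ H w)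
    (η : ℝ) (hη : 0 < η)
    (z : ℕ → EuclideanSpace ℝ (Fin n ⊕ Fin n))
    (hz : ∀ k, z (k+1) = z k -
      η • Matrix.toEuclideanLin (Matrix.fromBlocks 0 A (-Aᵀ) 0) (gradient H (z (k+1)))) :
    ∀ k : ℕ, H (z k) - H zstar ≤ (H (z 0) - H zstar) / (1 + η ^ 2 * αmin ^ 2 * μ ^ 2) ^ k := by
  have step : ∀ k, (H (z (k+1)) - H zstar) * (1 + η ^ 2 * αmin ^ 2 * μ ^ 2)
      ≤ H (z k) - H zstar := by
    intro k
    have hk := hz k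
    have s1 := hsc (z (k+1)) (z k)
    have s2 := hsc (z (k+1)) zstar
    set g := gradient H (z (k+1))
    have e : z k - z (k+1) =
        η • Matrix.toEuclideanLin (Matrix.fromBlocks 0 A (-Aᵀ) 0) g := by
      rw [hk]; abel
    rw [e, inner_smul_right, aux_skew, norm_smul, mul_pow, Real.norm_eq_abs, sq_abs] at s1
    have hn := aux_norm A αmin hαmin hA hAT g
    have hpl : 2 * μ * (H (z (k+1)) - H zstar) ≤ ‖g‖ ^ 2 := by
      have h0 : 0 ≤ ‖g + μ • (zstar - z (k+1))‖ ^ 2 := by positivity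
      rw [norm_add_sq_real, inner_smul_right, norm_smul, mul_pow, Real.norm_eq_abs, sq_abs] at h0
      nlinarith
    have h3 : μ / 2 * η ^ 2 * (αmin ^ 2 * (2 * μ * (H (z (k+1)) - H zstar))) ≤
        μ / 2 * η ^ 2 * ‖Matrix.toEuclideanLin (Matrix.fromBlocks 0 A (-Aᵀ) 0) g‖ ^ 2 := by
      refine mul_le_mul_of_nonneg_left (le_trans ?_ hn) (by positivity)
      exact mul_le_mul_of_nonneg_left hpl (by positivity)
    linarith
  have hc : 0 < 1 + η ^ 2 * αmin ^ 2 * μ ^ 2 := by positivity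
  intro k
  induction k with
  | zero => simp
  | succ k ih =>
    rw [pow_succ, ← div_div, le_div_iff₀ hc]
    exact (step k).trans ih
end

section
/- Let H : ℝ^{m+n} → ℝ be convex, differentiable, and L₂-smooth with respect to the ℓ₂-norm, with a minimizer z* = argmin H. Let α_max be the maximum singular value of A ∈ ℝ^{m×n} and J = [[0, A],[−Aᵀ, 0]]. If (z_k) satisfies the backward method z_{k+1} = z_k − η J ∇H(z_{k+1}) with step size η > 0, then for all k ≥ 0: H(z_k) − H(z*) ≥ (H(z₀) − H(z*)) / (1 + η² α_max² L₂²)^k. -/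
open RealInnerProductSpace Matrix

lemma aux_descent {E : Type*} [NormedAddCommGroup E] [InnerProductSpace ℝ E] [CompleteSpace E]
    (H : E → ℝ) (hH : Differentiable ℝ H) (L : ℝ)
    (hs : ∀ w w', ‖gradient H w - gradient H w'‖ ≤ L * ‖w - w'‖) (w d : E) :
    H (w + d) ≤ H w + inner ℝ (gradient H w) d + L / 2 * ‖d‖ ^ 2 := by
  have hder : ∀ t : ℝ, HasDerivAt
      (fun t : ℝ => H (w + t • d) - t * inner ℝ (gradient H w) d - L / 2 * ‖d‖ ^ 2 * t ^ 2)
      (inner ℝ (gradient H (w + t • d)) d - inner ℝ (gradient H w) d - L * ‖d‖ ^ 2 * t) t := by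
    intro t
    have h1 : HasDerivAt (fun t : ℝ => w + t • d) d t := by
      simpa using ((hasDerivAt_id t).smul_const d).const_add w
    have h2 := (hH (w + t • d)).hasGradientAt.hasFDerivAt.comp_hasDerivAt t h1
    have h3 := (hasDerivAt_id t).mul_const (inner ℝ (gradient H w) d)
    have h4 := ((hasDerivAt_id t).pow 2).const_mul (L / 2 * ‖d‖ ^ 2)
    have h5 := (h2.sub h3).sub h4
    refine (h5.congr_deriv ?_)
    simp
    ring
  have hanti := antitoneOn_of_deriv_nonpos (convex_Icc (0:ℝ) 1)
    (fun t _ => (hder t).continuousAt.continuousWithinAt)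
    (fun t _ => (hder t).differentiableAt.differentiableWithinAt)
    (fun t ht => by
      rw [interior_Icc] at ht
      rw [(hder t).deriv, ← inner_sub_left]
      have h1 := real_inner_le_norm (gradient H (w + t • d) - gradient H w) d
      have h2 := hs (w + t • d) w
      rw [add_sub_cancel_left, norm_smul, Real.norm_of_nonneg ht.1.le] at h2
      nlinarith [mul_le_mul_of_nonneg_right h2 (norm_nonneg d)])
  have := hanti (by simp) (by simp) zero_le_one
  simp at this ⊢
  linarith

lemma aux_grad {E : Type*} [NormedAddCommGroup E] [InnerProductSpace ℝ E] [CompleteSpace E]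
    (H : E → ℝ) (hH : Differentiable ℝ H) (L : ℝ) (hL : 0 ≤ L)
    (hs : ∀ w w', ‖gradient H w - gradient H w'‖ ≤ L * ‖w - w'‖) (zs : E)
    (hmin : ∀ w, H zs ≤ H w) (w : E) :
    L * ‖gradient H w‖ ^ 2 ≤ 2 * L ^ 2 * (H w - H zs) := by
  rcases hL.eq_or_lt with h | h
  · simp [← h]
  have h1 := aux_descent H hH L hs w (-(L⁻¹ • gradient H w))
  have h2 := hmin (w + -(L⁻¹ • gradient H w))
  rw [inner_neg_right, inner_smul_right, real_inner_self_eq_norm_sq, norm_neg, norm_smul,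
    Real.norm_of_nonneg (by positivity)] at h1
  have h3 : L⁻¹ * ‖gradient H w‖ ^ 2 ≤ 2 * (H w - H zs) := by
    have : L / 2 * (L⁻¹ * ‖gradient H w‖) ^ 2 = L⁻¹ * ‖gradient H w‖ ^ 2 / 2 := by
      field_simp
    linarith
  calc L * ‖gradient H w‖ ^ 2 = L ^ 2 * (L⁻¹ * ‖gradient H w‖ ^ 2) := by field_simp
    _ ≤ L ^ 2 * (2 * (H w - H zs)) := by gcongr
    _ = _ := by ring

lemma aux_J {m n : ℕ} (A : Matrix (Fin m) (Fin n) ℝ) (αmax : ℝ) 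
    (hA : ∀ v : EuclideanSpace ℝ (Fin n), ‖Matrix.toEuclideanLin A v‖ ≤ αmax * ‖v‖)
    (hAT : ∀ v : EuclideanSpace ℝ (Fin m), ‖Matrix.toEuclideanLin Aᵀ v‖ ≤ αmax * ‖v‖)
    (g : EuclideanSpace ℝ (Fin m ⊕ Fin n)) :
    inner ℝ g (Matrix.toEuclideanLin (Matrix.fromBlocks 0 A (-Aᵀ) 0) g) = 0 ∧
    ‖Matrix.toEuclideanLin (Matrix.fromBlocks 0 A (-Aᵀ) 0) g‖ ^ 2 ≤ αmax ^ 2 * ‖g‖ ^ 2 := by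
  have e1 : ∀ i, Matrix.toEuclideanLin (Matrix.fromBlocks 0 A (-Aᵀ) 0) g (Sum.inl i)
      = ∑ j, A i j * g (Sum.inr j) := by
    intro i
    simp [Matrix.toLpLin_apply, Matrix.mulVec, dotProduct]
  have e2 : ∀ j, Matrix.toEuclideanLin (Matrix.fromBlocks 0 A (-Aᵀ) 0) g (Sum.inr j)
      = - ∑ i, A i j * g (Sum.inl i) := by
    intro i
    simp [Matrix.toLpLin_apply, Matrix.mulVec, dotProduct]
  constructor
  · rw [PiLp.inner_apply, Fintype.sum_sum_type]
    simp only [e1, e2, RCLike.inner_apply, conj_trivial, neg_mul, Finset.sum_neg_distrib,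
      Finset.sum_mul]
    rw [Finset.sum_comm, ← sub_eq_add_neg, sub_eq_zero]
    refine Finset.sum_congr rfl fun _ _ => Finset.sum_congr rfl fun _ _ => by ring
  · have h1 := pow_le_pow_left₀ (norm_nonneg _) (hA (WithLp.toLp 2 fun j => g (Sum.inr j))) 2
    have h2 := pow_le_pow_left₀ (norm_nonneg _) (hAT (WithLp.toLp 2 fun j => g (Sum.inl j))) 2
    rw [mul_pow, EuclideanSpace.real_norm_sq_eq, EuclideanSpace.real_norm_sq_eq] at h1 h2
    rw [EuclideanSpace.real_norm_sq_eq, EuclideanSpace.real_norm_sq_eq, Fintype.sum_sum_type,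
      Fintype.sum_sum_type]
    simp only [e1, e2, neg_sq]
    simp [Matrix.toLpLin_apply, Matrix.mulVec, dotProduct] at h1 h2
    linarith

/-- **The backward method decreases the energy at most exponentially fast for smooth convex `H`.**
If `H` is convex and `L₂`-smooth, then along `z_{k+1} = z_k − η J ∇H(z_{k+1})` one has
`H(z_k) − H(z*) ≥ (H(z₀) − H(z*)) / (1 + η² α_max² L₂²)^k`. -/
theorem backward_method_energy_decrease_smooth {m n : ℕ}
    (A : Matrix (Fin m) (Fin n) ℝ)
    (αmax : ℝ) (hαmax : 0 ≤ αmax)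
    -- `αmax` is (an upper bound for) the maximum singular value of `A`
    (hA : ∀ v : EuclideanSpace ℝ (Fin n), ‖Matrix.toEuclideanLin A v‖ ≤ αmax * ‖v‖)
    (hAT : ∀ v : EuclideanSpace ℝ (Fin m), ‖Matrix.toEuclideanLin Aᵀ v‖ ≤ αmax * ‖v‖)
    (H : EuclideanSpace ℝ (Fin m ⊕ Fin n) → ℝ)
    (hH : Differentiable ℝ H) (hconv : ConvexOn ℝ Set.univ H)
    (L₂ : ℝ)
    -- `H` is `L₂`-smooth with respect to the `ℓ₂`-norm
    (hsmooth : ∀ w w', ‖gradient H w - gradient H w'‖ ≤ L₂ * ‖w - w'‖)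
    (zstar : EuclideanSpace ℝ (Fin m ⊕ Fin n)) (hmin : ∀ w, H zstar ≤ H w)
    (η : ℝ) (hη : 0 < η)
    (z : ℕ → EuclideanSpace ℝ (Fin m ⊕ Fin n))
    (hz : ∀ k, z (k+1) = z k -
      η • Matrix.toEuclideanLin (Matrix.fromBlocks 0 A (-Aᵀ) 0) (gradient H (z (k+1)))) :
    ∀ k : ℕ, (H (z 0) - H zstar) / (1 + η ^ 2 * αmax ^ 2 * L₂ ^ 2) ^ k ≤ H (z k) - H zstar := by
  have hs' : ∀ w w', ‖gradient H w - gradient H w'‖ ≤ |L₂| * ‖w - w'‖ := fun w w' =>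
    (hsmooth w w').trans (mul_le_mul_of_nonneg_right (le_abs_self _) (norm_nonneg _))
  have hpos : 0 < 1 + η ^ 2 * αmax ^ 2 * L₂ ^ 2 := by positivity
  intro k
  induction k with
  | zero => simp
  | succ k ih =>
    set g := gradient H (z (k+1)) with hg
    obtain ⟨hJ1, hJ2⟩ := aux_J A αmax hA hAT g
    have hzk := hz k
    rw [← hg] at hzk
    set d := Matrix.toEuclideanLin (Matrix.fromBlocks 0 A (-Aᵀ) 0) g
    have hzk' : z k = z (k+1) + η • d := by rw [hzk]; abel
    have h1 := aux_descent H hH _ hs' (z (k+1)) (η • d)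
    rw [← hzk', ← hg, inner_smul_right, hJ1, norm_smul, mul_pow, Real.norm_of_nonneg hη.le] at h1
    have h2 := aux_grad H hH _ (abs_nonneg L₂) hs' zstar hmin (z (k+1))
    rw [← hg, sq_abs] at h2
    have h3 : |L₂| / 2 * (η ^ 2 * ‖d‖ ^ 2) ≤ |L₂| / 2 * (η ^ 2 * (αmax ^ 2 * ‖g‖ ^ 2)) := by
      gcongr
    have h4 := mul_le_mul_of_nonneg_left h2 (by positivity : 0 ≤ η ^ 2 * αmax ^ 2)
    rw [pow_succ, ← div_div, div_le_iff₀ hpos]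
    refine ih.trans ?_
    nlinarith
end
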